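/- arXiv:2602.22838 — 4 statements merged into one kernel-verified Lean document; each statement's English description precedes it below -/
import Mathlib

section
/- For every integer k with 0 ≤ k < ⌈(n−1)/2⌉, the Plurality social choice correspondence is not k-augmentation strategyproof: there exist a profile ≻ with n voters, a voter i, a manipulation ≻'_i, and a tie-breaker τ such that Plur_τ(≻'_i, ≻_{−i}) ≻_i Plur_τ(≻ + k(≻_i)). Combined with the matching upper bound, the manipulation potential of Plurality is exactly ⌈(n−1)/2⌉. -/
open Finset

/-- A strict linear preference order over `m` candidates, encoded as the permutation sending
each candidate to its rank; rank `0` is the most preferred position, so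
`c ≻ c'` iff `p c < p c'`. -/
abbrev Pref (m : ℕ) := Equiv.Perm (Fin m)

/-- A profile of `N` voters, each with a strict preference over `m` candidates. -/
abbrev Profile (m N : ℕ) := Fin N → Pref m

/-- A social choice correspondence: for each number `N` of voters, it maps each `N`-voter
profile to a set of (tied) winners. -/
abbrev SCC (m : ℕ) := (N : ℕ) → Profile m N → Finset (Fin m)

/-- The profile `P` with `k` extra copies of voter `i`'s preference appended. -/
def addCopies {m n : ℕ} (P : Profile m n) (i : Fin n) (k : ℕ) : Profile m (n + k) :=
  fun j => if h : (j : ℕ) < n then P ⟨j, h⟩ else P i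

/-- Break a tie among the candidates in `A` using the linear tie-breaking order `τ`:
the winner is the `τ`-maximal (lowest `τ`-rank) element of `A`. -/
noncomputable def tiebreak {m : ℕ} [NeZero m] (τ : Pref m) (A : Finset (Fin m)) : Fin m :=
  if h : A.Nonempty then τ.symm ((A.image (fun c => τ c)).min' (h.image _)) else 0

/-- `F` is `k`-augmentation strategyproof on `n`-voter profiles: for every tie-breaker `τ`,
profile `P`, voter `i`, and alternative preference `q`, voter `i` weakly prefers the outcome
obtained by adding `k` truthful copies of her vote to the outcome of the manipulation `q`. -/
def kASP (m n : ℕ) [NeZero m] (F : SCC m) (k : ℕ) : Prop :=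
  ∀ (τ : Pref m) (P : Profile m n) (i : Fin n) (q : Pref m),
    (P i) (tiebreak τ (F (n + k) (addCopies P i k))) ≤
      (P i) (tiebreak τ (F n (Function.update P i q)))

/-- The manipulation potential of `F` on `n`-voter profiles: the least `k` such that `F` is
`k'`-augmentation strategyproof for all `k' ≥ k`, and `⊤` (i.e. `∞`) if no such `k` exists. -/
noncomputable def manipPot (m n : ℕ) [NeZero m] (F : SCC m) : ℕ∞ :=
  sInf ((fun k : ℕ => (k : ℕ∞)) '' {k : ℕ | ∀ k' : ℕ, k ≤ k' → kASP m n F k'})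

/-- The number of voters ranking candidate `c` first. -/
def pluralityScore {m N : ℕ} [NeZero m] (P : Profile m N) (c : Fin m) : ℕ :=
  (Finset.univ.filter (fun i => P i c = 0)).card

/-- Plurality: the winners are the candidates ranked first by the most voters. -/
def plurality (m : ℕ) [NeZero m] : SCC m := fun _ P =>
  Finset.univ.filter (fun c => ∀ c', pluralityScore P c' ≤ pluralityScore P c)


theorem tb_spec {m : ℕ} [NeZero m] (τ : Pref m) (A : Finset (Fin m)) (h : A.Nonempty) :
    tiebreak τ A ∈ A ∧ ∀ y ∈ A, τ (tiebreak τ A) ≤ τ y := by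
  unfold tiebreak
  rw [dif_pos h]
  constructor
  · have := Finset.min'_mem (A.image (fun c => τ c)) (h.image _)
    rw [Finset.mem_image] at this
    obtain ⟨x, hx, hx2⟩ := this
    rw [← hx2]
    simpa using hx
  · intro y hy
    simp only [Equiv.apply_symm_apply]
    exact Finset.min'_le _ _ (Finset.mem_image_of_mem _ hy)

theorem tb_eq {m : ℕ} [NeZero m] (τ : Pref m) (A : Finset (Fin m)) (x : Fin m) (hx : x ∈ A)
    (h : ∀ y ∈ A, τ x ≤ τ y) : tiebreak τ A = x := by
  obtain ⟨h1, h2⟩ := tb_spec τ A ⟨x, hx⟩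
  exact τ.injective (le_antisymm (h2 x hx) (h _ h1))

theorem mem_plur {m N : ℕ} [NeZero m] (P : Profile m N) (x : Fin m) :
    x ∈ plurality m N P ↔ ∀ c', pluralityScore P c' ≤ pluralityScore P x := by
  simp [plurality]

theorem plur_nonempty {m N : ℕ} [NeZero m] (P : Profile m N) : (plurality m N P).Nonempty := by
  obtain ⟨x, _, hx⟩ := Finset.exists_max_image (Finset.univ : Finset (Fin m))
    (pluralityScore P) ⟨0, Finset.mem_univ _⟩
  exact ⟨x, (mem_plur P x).2 fun c => hx c (Finset.mem_univ _)⟩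

theorem score_sum {m N : ℕ} [NeZero m] (P : Profile m N) (c : Fin m) :
    pluralityScore P c = ∑ i, if P i c = 0 then 1 else 0 := by
  simp [pluralityScore]

theorem score_add {m n : ℕ} [NeZero m] (P : Profile m n) (i : Fin n) (k : ℕ) (c : Fin m) :
    pluralityScore (addCopies P i k) c = pluralityScore P c + if P i c = 0 then k else 0 := by
  rw [score_sum, score_sum, Fin.sum_univ_add]
  congr 1
  · simp [addCopies]
  · simp [addCopies]

theorem score_update {m n : ℕ} [NeZero m] (P : Profile m n) (i : Fin n) (q : Pref m) (c : Fin m) :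
    pluralityScore (Function.update P i q) c + (if P i c = 0 then 1 else 0)
      = pluralityScore P c + if q c = 0 then 1 else 0 := by
  rw [score_sum, score_sum, ← Finset.add_sum_erase _ _ (Finset.mem_univ i),
    ← Finset.add_sum_erase (Finset.univ) (fun j => if P j c = 0 then 1 else 0) (Finset.mem_univ i)]
  have : ∑ x ∈ Finset.univ.erase i, (if (Function.update P i q) x c = 0 then 1 else 0)
      = ∑ x ∈ Finset.univ.erase i, (if P x c = 0 then 1 else 0) := by
    apply Finset.sum_congr rfl
    intro x hx
    rw [Function.update_of_ne (Finset.ne_of_mem_erase hx)]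
  rw [this, Function.update_self]
  ring

theorem score_pair {m N : ℕ} [NeZero m] (P : Profile m N) (x y : Fin m) (h : x ≠ y) :
    pluralityScore P x + pluralityScore P y ≤ N := by
  unfold pluralityScore
  rw [← Finset.card_union_of_disjoint]
  · simpa using Finset.card_le_univ (α := Fin N) _
  · rw [Finset.disjoint_filter]
    intro i _ h1 h2
    exact h ((P i).injective (h1.trans h2.symm))

theorem upper (m n : ℕ) [NeZero m] (k : ℕ) (hk : n / 2 ≤ k) : kASP m n (plurality m) k := by
  intro τ P i q
  obtain ⟨h1, -⟩ := tb_spec τ _ (plur_nonempty (addCopies P i k))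
  generalize tiebreak τ (plurality m (n + k) (addCopies P i k)) = x at *
  by_cases hx : P i x = 0
  · rw [hx]; exact Fin.zero_le _
  rw [mem_plur] at h1
  have h2 := h1 ((P i).symm 0)
  rw [score_add, score_add] at h2
  simp only [Equiv.apply_symm_apply, if_true, hx, if_false] at h2
  have h3 : 1 ≤ pluralityScore P ((P i).symm 0) := by
    unfold pluralityScore
    exact Finset.card_pos.2 ⟨i, by simp⟩
  have h4 := score_update P i q x
  simp only [hx, if_false] at h4
  have hw : ∀ y, y ≠ x → pluralityScore (Function.update P i q) y <
      pluralityScore (Function.update P i q) x := by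
    intro y hy
    have := score_pair (Function.update P i q) y x hy
    omega
  have : tiebreak τ (plurality m n (Function.update P i q)) = x := by
    have h5 := (tb_spec τ _ (plur_nonempty (Function.update P i q))).1
    rw [mem_plur] at h5
    by_contra hne
    exact absurd (h5 x) (not_le.2 (hw _ hne))
  rw [this]

theorem card_fin_interval (n l u : ℕ) (hu : u ≤ n) (p : Fin n → Prop) [DecidablePred p]
    (hp : ∀ j : Fin n, p j ↔ l ≤ (j : ℕ) ∧ (j : ℕ) < u) :
    (Finset.univ.filter p).card = u - l := by
  rw [← Nat.card_Ico, ← Finset.card_map Fin.valEmbedding]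
  congr 1
  ext j
  simp only [Finset.mem_map, Finset.mem_filter, Finset.mem_univ, true_and, hp, Finset.mem_Ico,
    Fin.valEmbedding_apply]
  constructor
  · rintro ⟨x, hx, rfl⟩; exact hx
  · intro h; exact ⟨⟨j, by omega⟩, h, rfl⟩

theorem lower (m n : ℕ) [NeZero m] (hm : 3 ≤ m) (hn : 2 ≤ n) (k : ℕ) (hk : k < n / 2) :
    ¬ kASP m n (plurality m) k := by
  intro H
  obtain ⟨b, hb⟩ : ∃ b : Fin m, (b : ℕ) = 1 := ⟨⟨1, by omega⟩, rfl⟩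
  obtain ⟨c, hc⟩ : ∃ c : Fin m, (c : ℕ) = 2 := ⟨⟨2, by omega⟩, rfl⟩
  have hb0 : b ≠ 0 := by intro h; rw [h] at hb; simp at hb
  have hc0 : c ≠ 0 := by intro h; rw [h] at hc; simp at hc
  have hbc : b ≠ c := by intro h; rw [h] at hb; omega
  have sw : ∀ x d : Fin m, Equiv.swap 0 x d = 0 ↔ d = x := by
    intro x d
    rw [Equiv.swap_apply_eq_iff, Equiv.swap_apply_left]
  let P : Profile m n := fun j => if (j : ℕ) = 0 then 1 else
    if (j : ℕ) ≤ n / 2 then Equiv.swap 0 c else Equiv.swap 0 b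
  let i : Fin n := ⟨0, by omega⟩
  have hPi : P i = 1 := by simp [P, i]
  have key : ∀ j d, P j d = 0 ↔ ((j : ℕ) = 0 ∧ d = 0) ∨ ((j : ℕ) ≠ 0 ∧ (j : ℕ) ≤ n / 2 ∧ d = c) ∨
      (n / 2 < (j : ℕ) ∧ d = b) := by
    intro j d
    simp only [P]
    split_ifs with h1 h2
    · simp [h1]
    · rw [sw]; simp [h1, h2]
    · rw [sw]; simp [h1, h2]; intro h; omega
  have s0 : pluralityScore P 0 = 1 := by
    unfold pluralityScore
    rw [card_fin_interval n 0 1 (by omega)]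
    intro j; rw [key]; simp [hb0.symm, hc0.symm]
  have sc : pluralityScore P c = n / 2 := by
    unfold pluralityScore
    rw [card_fin_interval n 1 (n / 2 + 1) (by omega)]
    · omega
    intro j; rw [key]; simp [hbc.symm, hc0]; omega
  have sb : pluralityScore P b = n - 1 - n / 2 := by
    unfold pluralityScore
    rw [card_fin_interval n (n / 2 + 1) n (by omega)]
    · omega
    intro j; rw [key]; simp [hbc, hb0] <;> omega
  have sd : ∀ d, d ≠ 0 → d ≠ b → d ≠ c → pluralityScore P d = 0 := by
    intro d h1 h2 h3
    unfold pluralityScore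
    rw [card_fin_interval n 0 0 (by omega)]
    intro j; rw [key]; simp [h1, h2, h3]
  have t : ∀ d, pluralityScore (addCopies P i k) d =
      pluralityScore P d + if d = 0 then k else 0 := by
    intro d; rw [score_add, hPi]; rfl
  have u : ∀ d, pluralityScore (Function.update P i (Equiv.swap 0 b)) d +
      (if d = 0 then 1 else 0) = pluralityScore P d + if d = b then 1 else 0 := by
    intro d
    have := score_update P i (Equiv.swap 0 b) d
    rw [hPi] at this
    have e1 : (if (1 : Pref m) d = 0 then 1 else 0) = if d = 0 then 1 else 0 := rfl
    have e2 : (if (Equiv.swap 0 b) d = 0 then 1 else 0) = if d = b then 1 else 0 :=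
      if_congr (sw b d) rfl rfl
    rw [e1, e2] at this
    exact this
  have t0 := t 0
  have tb := t b
  have tc := t c
  have u0 := u 0
  have ub := u b
  have uc := u c
  simp only [hb0, hc0, hbc.symm, hb0.symm, if_true, if_false, s0, sb, sc] at t0 tb tc u0 ub uc
  have td : ∀ d, d ≠ 0 → d ≠ b → d ≠ c → pluralityScore (addCopies P i k) d = 0 := by
    intro d h1 h2 h3
    rw [t, sd d h1 h2 h3]; simp [h1]
  have ud : ∀ d, d ≠ 0 → d ≠ b → d ≠ c →
      pluralityScore (Function.update P i (Equiv.swap 0 b)) d = 0 := by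
    intro d h1 h2 h3
    have := u d
    simpa [sd d h1 h2 h3, h1, h2] using this
  have mc : c ∈ plurality m (n + k) (addCopies P i k) := by
    rw [mem_plur]
    intro d
    by_cases h1 : d = 0
    · subst h1; omega
    by_cases h2 : d = b
    · subst h2; omega
    by_cases h3 : d = c
    · subst h3; omega
    rw [td d h1 h2 h3]; omega
  have mb : b ∈ plurality m n (Function.update P i (Equiv.swap 0 b)) := by
    rw [mem_plur]
    intro d
    by_cases h1 : d = 0
    · subst h1; omega
    by_cases h2 : d = b
    · subst h2; omega
    by_cases h3 : d = c
    · subst h3; omega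
    rw [ud d h1 h2 h3]; omega
  have fin : ∀ τ : Pref m, tiebreak τ (plurality m (n + k) (addCopies P i k)) = c →
      tiebreak τ (plurality m n (Function.update P i (Equiv.swap 0 b))) = b → False := by
    intro τ h1 h2
    have := H τ P i (Equiv.swap 0 b)
    rw [h1, h2, hPi, Equiv.Perm.one_apply, Equiv.Perm.one_apply, Fin.le_def] at this
    omega
  rcases Nat.even_or_odd' n with ⟨r, hr | hr⟩
  · -- even case
    have e0 : (Equiv.swap 0 b * Equiv.swap 0 c) 0 = c := by
      rw [Equiv.Perm.mul_apply, Equiv.swap_apply_left, Equiv.swap_apply_of_ne_of_ne hc0 hbc.symm]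
    have eb : (Equiv.swap 0 b * Equiv.swap 0 c) b = 0 := by
      rw [Equiv.Perm.mul_apply, Equiv.swap_apply_of_ne_of_ne hb0 hbc, Equiv.swap_apply_right]
    have ec : (Equiv.swap 0 b * Equiv.swap 0 c) c = b := by
      rw [Equiv.Perm.mul_apply, Equiv.swap_apply_right, Equiv.swap_apply_left]
    apply fin (Equiv.swap 0 b * Equiv.swap 0 c)
    · apply tb_eq _ _ _ mc
      intro y hy
      rw [mem_plur] at hy
      have hy := hy c
      by_cases h1 : y = 0
      · subst h1; rw [e0, ec, Fin.le_def]; omega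
      by_cases h2 : y = b
      · subst h2; omega
      by_cases h3 : y = c
      · subst h3; exact le_rfl
      rw [td y h1 h2 h3] at hy; omega
    · apply tb_eq _ _ _ mb
      intro y hy
      rw [eb]; exact Fin.zero_le _
  · -- odd case
    apply fin (Equiv.swap 0 c)
    · apply tb_eq _ _ _ mc
      intro y hy
      rw [Equiv.swap_apply_right]; exact Fin.zero_le _
    · apply tb_eq _ _ _ mb
      intro y hy
      rw [mem_plur] at hy
      have hy := hy b
      by_cases h1 : y = 0
      · subst h1; omega
      by_cases h2 : y = b
      · subst h2; exact le_rfl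
      by_cases h3 : y = c
      · subst h3; omega
      rw [ud y h1 h2 h3] at hy; omega

/-- For every `k < ⌈(n−1)/2⌉`, Plurality is not `k`-augmentation
strategyproof; combined with the matching upper bound, `Φ(Plur) = ⌈(n−1)/2⌉`. -/
theorem plurality_manipPot_eq (m n : ℕ) [NeZero m] (hm : 3 ≤ m) (hn : 2 ≤ n) :
    (∀ k : ℕ, k < (n - 1 + 1) / 2 → ¬ kASP m n (plurality m) k) ∧
      manipPot m n (plurality m) = (((n - 1 + 1) / 2 : ℕ) : ℕ∞) := by
  have hnn : n - 1 + 1 = n := by omega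
  rw [hnn]
  refine ⟨fun k hk => lower m n hm hn k hk, ?_⟩
  unfold manipPot
  apply le_antisymm
  · exact sInf_le ⟨n / 2, fun k' hk' => upper m n k' hk', rfl⟩
  · apply le_sInf
    rintro _ ⟨k, hk, rfl⟩
    by_contra hlt
    have hlt : k < n / 2 := by
      rw [not_le] at hlt
      exact Nat.cast_lt.1 hlt
    exact lower m n hm hn k hlt (hk k le_rfl)
end

section
/- Assume m ≥ 4, n ≥ 5, and n−1 is divisible by 4. Then for every integer k with 0 ≤ k < n−1, the Plurality-with-Runoff social choice correspondence is not k-augmentation strategyproof: there exist a profile with n voters, a voter i, a manipulation, and a tie-breaker under which the manipulation yields a strictly better outcome for voter i than adding k truthful copies of her vote. Since Plurality with Runoff is majority-consistent, its manipulation potential is exactly n−1. -/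
open Finset

/-- Plurality with Runoff, with parallel-universes tiebreaking: `c` wins if there is a pair
`{a, b}` of distinct candidates that can be the two plurality front-runners (every other
candidate has plurality score at most both of theirs) such that `c ∈ {a, b}` and at least
half of the voters prefer `c` to the other member of the pair. -/
def pwr (m : ℕ) [NeZero m] : SCC m := fun N P =>
  Finset.univ.filter (fun c =>
    ∃ a b : Fin m, a ≠ b ∧
      (∀ d : Fin m, d ≠ a → d ≠ b →
        pluralityScore P d ≤ pluralityScore P a ∧ pluralityScore P d ≤ pluralityScore P b) ∧
      ((c = a ∧ N ≤ 2 * (Finset.univ.filter (fun i => P i a < P i b)).card) ∨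
        (c = b ∧ N ≤ 2 * (Finset.univ.filter (fun i => P i b < P i a)).card)))

theorem tb_mem {m : ℕ} [NeZero m] (τ : Pref m) (A : Finset (Fin m)) (h : A.Nonempty) :
    tiebreak τ A ∈ A := by
  unfold tiebreak
  rw [dif_pos h]
  have := (A.image (fun c => τ c)).min'_mem (h.image _)
  rw [Finset.mem_image] at this
  obtain ⟨c, hc, hc2⟩ := this
  rw [← hc2]
  simpa using hc

theorem tb_top {m : ℕ} [NeZero m] (τ : Pref m) (A : Finset (Fin m)) (x : Fin m) (hx : x ∈ A)
    (h0 : τ x = 0) : tiebreak τ A = x := by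
  have h : A.Nonempty := ⟨x, hx⟩
  unfold tiebreak
  rw [dif_pos h, Equiv.symm_apply_eq, h0]
  apply le_antisymm
  · rw [← h0]
    exact Finset.min'_le _ _ (Finset.mem_image_of_mem _ hx)
  · exact Fin.zero_le _

theorem card_iv (N l u : ℕ) (hu : u ≤ N) :
    (univ.filter (fun j : Fin N => l ≤ (j : ℕ) ∧ (j : ℕ) < u)).card = u - l := by
  rw [← Nat.card_Ico, ← Finset.card_map (Fin.valEmbedding)]
  congr 1
  ext a
  simp only [Finset.mem_map, Finset.mem_filter, Finset.mem_univ, true_and,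
    Fin.valEmbedding_apply, Finset.mem_Ico]
  constructor
  · rintro ⟨j, hj, rfl⟩; exact hj
  · intro h; exact ⟨⟨a, by omega⟩, h, rfl⟩

theorem card_of (N l u : ℕ) (hu : u ≤ N) {p : Fin N → Prop} [DecidablePred p]
    (h : ∀ j : Fin N, p j ↔ l ≤ (j : ℕ) ∧ (j : ℕ) < u) :
    (univ.filter p).card = u - l := by
  rw [← card_iv N l u hu]
  congr 1
  ext j
  simp [h]

/-- candidates -/
def cA {m : ℕ} (hm : 4 ≤ m) : Fin m := ⟨0, by omega⟩
def cB {m : ℕ} (hm : 4 ≤ m) : Fin m := ⟨1, by omega⟩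
def cX {m : ℕ} (hm : 4 ≤ m) : Fin m := ⟨2, by omega⟩

def pX {m : ℕ} (hm : 4 ≤ m) : Pref m := Equiv.swap (cA hm) (cX hm)
def pB {m : ℕ} (hm : 4 ≤ m) : Pref m :=
  Equiv.swap (cB hm) (cX hm) * Equiv.swap (cA hm) (cB hm)

def GG {m : ℕ} (hm : 4 ≤ m) (t c N : ℕ) : Profile m N := fun j =>
  if (j : ℕ) < 2 * t then pX hm else if (j : ℕ) < c then pB hm else 1

theorem pX_val {m : ℕ} (hm : 4 ≤ m) (d : Fin m) : (pX hm d : ℕ) =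
    if (d : ℕ) = 0 then 2 else if (d : ℕ) = 2 then 0 else (d : ℕ) := by
  simp only [pX, Equiv.swap_apply_def, cA, cX, Fin.ext_iff]
  split_ifs <;> simp

theorem pB_val {m : ℕ} (hm : 4 ≤ m) (d : Fin m) : (pB hm d : ℕ) =
    if (d : ℕ) = 0 then 2 else if (d : ℕ) = 1 then 0 else if (d : ℕ) = 2 then 1 else (d : ℕ) := by
  simp only [pB, Equiv.Perm.mul_apply, Equiv.swap_apply_def, cA, cB, cX, Fin.ext_iff]
  split_ifs <;> simp_all

theorem GG_val {m : ℕ} (hm : 4 ≤ m) (t c N : ℕ) (j : Fin N) (d : Fin m) :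
    (GG hm t c N j d : ℕ) = if (j : ℕ) < 2 * t then
      (if (d : ℕ) = 0 then 2 else if (d : ℕ) = 2 then 0 else (d : ℕ)) else if (j : ℕ) < c then
      (if (d : ℕ) = 0 then 2 else if (d : ℕ) = 1 then 0 else if (d : ℕ) = 2 then 1 else (d : ℕ))
      else (d : ℕ) := by
  rw [← pX_val hm, ← pB_val hm]
  unfold GG
  split_ifs <;> simp

theorem GG_score {m : ℕ} [NeZero m] (hm : 4 ≤ m) (t c N : ℕ) (h1 : 2 * t ≤ c) (h2 : c ≤ N)
    (d : Fin m) :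
    pluralityScore (GG hm t c N) d = if (d : ℕ) = 0 then N - c else if (d : ℕ) = 1 then c - 2 * t
      else if (d : ℕ) = 2 then 2 * t else 0 := by
  unfold pluralityScore
  have hz : ∀ j : Fin N, (GG hm t c N j d = 0) ↔ ((GG hm t c N j d : ℕ) = 0) := by
    intro j; rw [Fin.ext_iff]; simp
  simp only [hz, GG_val]
  by_cases d0 : (d : ℕ) = 0
  · simp only [d0, if_true]
    apply card_of N c N le_rfl
    intro j
    have := j.2
    grind
  by_cases d1 : (d : ℕ) = 1
  · simp only [d1, if_true]
    apply card_of N (2 * t) c h2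
    intro j
    have := j.2
    grind
  by_cases d2 : (d : ℕ) = 2
  · simp only [d2, if_true]
    apply card_of N 0 (2 * t) (by omega)
    intro j
    have := j.2
    grind
  · simp only [d0, d1, d2, if_false]
    apply card_of N 0 0 (by omega)
    intro j
    have := j.2
    grind

theorem GG_xa {m : ℕ} (hm : 4 ≤ m) (t c N : ℕ) (h1 : 2 * t ≤ c) (h2 : c ≤ N) :
    (univ.filter (fun j => GG hm t c N j (cX hm) < GG hm t c N j (cA hm))).card = c := by
  apply card_of N 0 c h2
  intro j
  have := j.2
  simp only [Fin.lt_def, GG_val, cX, cA]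
  grind

theorem GG_bx {m : ℕ} (hm : 4 ≤ m) (t c N : ℕ) (h1 : 2 * t ≤ c) (h2 : c ≤ N) :
    (univ.filter (fun j => GG hm t c N j (cB hm) < GG hm t c N j (cX hm))).card = N - 2 * t := by
  apply card_of N (2 * t) N le_rfl
  intro j
  have := j.2
  simp only [Fin.lt_def, GG_val, cX, cB]
  grind

theorem GG_xb {m : ℕ} (hm : 4 ≤ m) (t c N : ℕ) (h1 : 2 * t ≤ c) (h2 : c ≤ N) :
    (univ.filter (fun j => GG hm t c N j (cX hm) < GG hm t c N j (cB hm))).card = 2 * t := by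
  apply card_of N 0 (2 * t) (by omega)
  intro j
  have := j.2
  simp only [Fin.lt_def, GG_val, cX, cB]
  grind

theorem GG_truth {m : ℕ} [NeZero m] (hm : 4 ≤ m) (t c N : ℕ) (h1 : 2 * t ≤ c) (h2 : c ≤ N)
    (h3 : c ≤ 4 * t) (h4 : c - 2 * t ≤ N - c) (h5 : N ≤ 2 * c) :
    cX hm ∈ pwr m N (GG hm t c N) := by
  simp only [pwr, mem_filter, mem_univ, true_and]
  refine ⟨cX hm, cA hm, by simp [cX, cA, Fin.ext_iff], ?_, Or.inl ⟨rfl, ?_⟩⟩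
  · intro d hx ha
    simp only [GG_score hm t c N h1 h2]
    simp only [cX, cA, ne_eq, Fin.ext_iff] at *
    split_ifs <;> omega
  · rw [GG_xa hm t c N h1 h2]; exact h5

theorem GG_manip {m : ℕ} [NeZero m] (hm : 4 ≤ m) (t c N : ℕ) (h1 : 2 * t < c) (h2 : c ≤ N)
    (h3 : N - c < c - 2 * t) (h4 : N - c < 2 * t) (h5 : 4 * t < N) (d : Fin m) :
    d ∈ pwr m N (GG hm t c N) ↔ d = cB hm := by
  simp only [pwr, mem_filter, mem_univ, true_and]
  constructor
  · rintro ⟨a, b, hab, hs, hd⟩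
    have hB := hs (cB hm)
    have hX := hs (cX hm)
    simp only [GG_score hm t c N h1.le h2] at hB hX
    have key : (a = cB hm ∧ b = cX hm) ∨ (a = cX hm ∧ b = cB hm) := by
      simp only [cX, cB, ne_eq, Fin.ext_iff] at hB hX hab ⊢
      by_contra hcon
      by_cases q1 : (1 : ℕ) = a
      · have q2 : ¬ (2 : ℕ) = b := by omega
        have := (hX (by omega) (by omega)).2
        split_ifs at this <;> omega
      · by_cases q2 : (1 : ℕ) = b
        · have q2 : ¬ (2 : ℕ) = a := by omega
          have := (hX (by omega) (by omega)).1
          split_ifs at this <;> omega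
        · obtain ⟨u, v⟩ := hB (by omega) (by omega)
          split_ifs at u v <;> omega
    rcases key with ⟨rfl, rfl⟩ | ⟨rfl, rfl⟩
    · rcases hd with ⟨h, _⟩ | ⟨_, h⟩
      · exact h
      · rw [GG_xb hm t c N h1.le h2] at h; omega
    · rcases hd with ⟨_, h⟩ | ⟨h, _⟩
      · rw [GG_xb hm t c N h1.le h2] at h; omega
      · exact h
  · rintro rfl
    refine ⟨cB hm, cX hm, by simp [cX, cB, Fin.ext_iff], ?_, Or.inl ⟨rfl, ?_⟩⟩
    · intro d hb hx
      simp only [GG_score hm t c N h1.le h2]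
      simp only [cX, cB, ne_eq, Fin.ext_iff] at *
      split_ifs <;> omega
    · rw [GG_bx hm t c N h1.le h2]; omega

theorem low_aux (m t c k : ℕ) [NeZero m] (hm : 4 ≤ m) (ht : 1 ≤ t) (h1 : 3 * t ≤ c)
    (h3 : c ≤ 4 * t) (h4 : 2 * c ≤ 6 * t + 1 + k) (h5 : 4 * t + 1 + k ≤ 2 * c) :
    ¬ kASP m (4 * t + 1) (pwr m) k := by
  intro h
  have hi := h (pX hm) (GG hm t c _) ⟨c, by omega⟩ (pB hm)
  have e1 : addCopies (GG hm t c (4 * t + 1)) ⟨c, by omega⟩ k = GG hm t c (4 * t + 1 + k) := by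
    funext j
    simp only [addCopies, GG]
    split_ifs <;> first | rfl | omega
  have e2 : Function.update (GG hm t c (4 * t + 1)) ⟨c, by omega⟩ (pB hm)
      = GG hm t (c + 1) (4 * t + 1) := by
    funext j
    simp only [Function.update_apply, GG, Fin.ext_iff]
    split_ifs <;> first | rfl | omega
  rw [e1, e2] at hi
  have r1 := tb_top (pX hm) _ _ (GG_truth hm t c (4 * t + 1 + k) (by omega) (by omega) h3
    (by omega) h5) (by rw [Fin.ext_iff, pX_val]; simp [cX])
  have hb := GG_manip hm t (c + 1) (4 * t + 1) (by omega) (by omega) (by omega) (by omega)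
    (by omega)
  have r2 := (hb _).1 (tb_mem (pX hm) _ ⟨_, (hb _).2 rfl⟩)
  rw [r1, r2, Fin.le_def, GG_val, GG_val] at hi
  simp only [cX, cB] at hi
  split_ifs at hi <;> omega

theorem low (m n : ℕ) [NeZero m] (hm : 4 ≤ m) (hn : 5 ≤ n)
    (hdvd : 4 ∣ (n - 1)) (k : ℕ) (hk : k < n - 1) : ¬ kASP m n (pwr m) k := by
  obtain ⟨t, ht⟩ := hdvd
  obtain rfl : n = 4 * t + 1 := by omega
  by_cases hkt : k + 1 ≤ 2 * t
  · exact low_aux m t (3 * t) k hm (by omega) (by omega) (by omega) (by omega) (by omega)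
  · exact low_aux m t (4 * t) k hm (by omega) (by omega) (by omega) (by omega) (by omega)

theorem pwr_majority {m N : ℕ} [NeZero m] (hm : 4 ≤ m) (P : Profile m N) (c : Fin m)
    (h : N < 2 * pluralityScore P c) (d : Fin m) : d ∈ pwr m N P ↔ d = c := by
  have hlt : ∀ b, b ≠ c → pluralityScore P c ≤ (univ.filter (fun i => P i c < P i b)).card := by
    intro b hb
    apply Finset.card_le_card
    intro i
    simp only [mem_filter, mem_univ, true_and]
    intro h0
    rw [h0, Fin.pos_iff_ne_zero]
    intro h1
    exact hb ((P i).injective (h1.trans h0.symm))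
  have hdis : ∀ b, b ≠ c → (univ.filter (fun i => P i b < P i c)).card + pluralityScore P c ≤ N := by
    intro b hb
    unfold pluralityScore
    rw [← Finset.card_union_of_disjoint]
    · exact (Finset.card_le_univ _).trans (by simp)
    · rw [Finset.disjoint_filter]
      intro i _ h1 h2
      rw [h2] at h1
      exact absurd h1 (by simp)
  have hsc : ∀ b, b ≠ c → pluralityScore P b < pluralityScore P c := by
    intro b hb
    have h1 := hdis b hb
    have h2 : pluralityScore P b ≤ (univ.filter (fun i => P i b < P i c)).card := by
      apply Finset.card_le_card
      intro i
      simp only [mem_filter, mem_univ, true_and]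
      intro h0
      rw [h0, Fin.pos_iff_ne_zero]
      intro h1
      exact hb ((P i).injective (h0.trans h1.symm))
    omega
  simp only [pwr, mem_filter, mem_univ, true_and]
  constructor
  · rintro ⟨a, b, hab, hs, hd⟩
    by_cases ha : a = c
    · subst ha
      rcases hd with ⟨h', _⟩ | ⟨_, h'⟩
      · exact h'
      · have := hdis b (Ne.symm hab); omega
    · by_cases hb : b = c
      · subst hb
        rcases hd with ⟨_, h'⟩ | ⟨h', _⟩
        · have := hdis a hab; omega
        · exact h'
      · have := (hs c (Ne.symm ha) (Ne.symm hb)).1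
        have := hsc a ha
        omega
  · rintro rfl
    have hne : (univ.erase d).Nonempty := by
      rw [← Finset.card_pos, Finset.card_erase_of_mem (mem_univ _)]
      simp; omega
    obtain ⟨b, hb, hmax⟩ := Finset.exists_max_image (univ.erase d) (pluralityScore P) hne
    have hbd : b ≠ d := (Finset.mem_erase.1 hb).1
    refine ⟨d, b, hbd.symm, ?_, Or.inl ⟨rfl, ?_⟩⟩
    · intro e h1 h2
      exact ⟨(hsc e h1).le, hmax e (by simp [h1])⟩
    · have := hlt b hbd; omega

theorem high (m n : ℕ) [NeZero m] (hm : 4 ≤ m) (hn : 5 ≤ n) (k : ℕ) (hk : n - 1 ≤ k) :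
    kASP m n (pwr m) k := by
  intro τ P i q
  set c := (P i).symm 0 with hc
  have hc0 : P i c = 0 := by simp [hc]
  have hs : k + 1 ≤ pluralityScore (addCopies P i k) c := by
    unfold pluralityScore
    have e := card_iv (n + k) n (n + k) le_rfl
    have hnot : (⟨i, by omega⟩ : Fin (n + k)) ∉
        univ.filter (fun j : Fin (n + k) => n ≤ (j : ℕ) ∧ (j : ℕ) < n + k) := by
      simp
    have e2 := Finset.card_insert_of_notMem hnot
    have : k + 1 = (insert (⟨i, by omega⟩ : Fin (n + k))
        (univ.filter (fun j : Fin (n + k) => n ≤ (j : ℕ) ∧ (j : ℕ) < n + k))).card := by omega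
    rw [this]
    apply Finset.card_le_card
    intro j hj
    simp only [mem_insert, mem_filter, mem_univ, true_and] at hj ⊢
    rcases hj with rfl | ⟨h1, h2⟩
    · simp [addCopies, hc0]
    · unfold addCopies
      rw [dif_neg (by omega)]
      exact hc0
  have hp := pwr_majority hm (addCopies P i k) c (by omega)
  rw [(hp _).1 (tb_mem τ _ ⟨_, (hp c).2 rfl⟩), hc0]
  exact Fin.zero_le _

/-- For `m ≥ 4`, `n ≥ 5` with `4 ∣ n − 1`: Plurality with Runoff is not
`k`-augmentation strategyproof for any `0 ≤ k < n − 1`, and (being majority-consistent)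
its manipulation potential is exactly `n − 1`. -/
theorem pwr_manipPot_eq (m n : ℕ) [NeZero m] (hm : 4 ≤ m) (hn : 5 ≤ n)
    (hdvd : 4 ∣ (n - 1)) :
    (∀ k : ℕ, k < n - 1 → ¬ kASP m n (pwr m) k) ∧
      manipPot m n (pwr m) = ((n - 1 : ℕ) : ℕ∞) := by
  refine ⟨fun k hk => low m n hm hn hdvd k hk, ?_⟩
  unfold manipPot
  apply le_antisymm
  · exact sInf_le ⟨n - 1, fun k' hk' => high m n hm hn k' hk', rfl⟩
  · apply le_sInf
    rintro _ ⟨k, hk, rfl⟩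
    have : n - 1 ≤ k := by
      by_contra hlt
      exact low m n hm hn hdvd k (by omega) (hk k le_rfl)
    exact Nat.cast_le.2 this
end

section
/- Let F_s be a positional scoring rule with s_1 ≠ s_2. Define, for ℓ ∈ {1, …, m−1}: U_s(1) = 1/(s_1 − s_2) − 1, and for ℓ ≥ 2, U_s(ℓ) = min( 1/(s_ℓ − s_{ℓ+1}) − 1 , ((n−1)(s̄↑_2 − s̄↓_{ℓ̄}) + 1/2)/(s̄↑_{ℓ̄} − s_{ℓ+1}) ), where 1/(s_ℓ − s_{ℓ+1}) is interpreted as ∞ when s_ℓ = s_{ℓ+1}. Then the manipulation potential of F_s satisfies Φ(F_s) ≤ max over ℓ ∈ {1, …, m−1} of U_s(ℓ); that is, F_s is k-augmentation strategyproof for every k ≥ max_ℓ U_s(ℓ). -/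
open Finset

/-- Total score of candidate `c` under the (1-indexed) scoring vector `s`:
a voter ranking `c` in position `ℓ ∈ {1, …, m}` contributes `s ℓ` points. -/
noncomputable def posScore {m N : ℕ} (s : ℕ → ℝ) (P : Profile m N) (c : Fin m) : ℝ :=
  ∑ i : Fin N, s ((P i c : ℕ) + 1)

/-- The positional scoring rule with scoring vector `s`: candidates with maximal score win. -/
noncomputable def posRule (m : ℕ) (s : ℕ → ℝ) : SCC m := fun _ P =>
  Finset.univ.filter (fun c => ∀ c', posScore s P c' ≤ posScore s P c)

/-- `s̄↑_ℓ`: the average of the top `ℓ` scores. -/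
noncomputable def upave (s : ℕ → ℝ) (ℓ : ℕ) : ℝ := (∑ j ∈ Finset.Icc 1 ℓ, s j) / (ℓ : ℝ)

/-- `s̄↓_ℓ`: the average of the bottom `ℓ` scores (out of `m`). -/
noncomputable def downave (s : ℕ → ℝ) (m ℓ : ℕ) : ℝ :=
  (∑ j ∈ Finset.Icc (m - ℓ + 1) m, s j) / (ℓ : ℝ)

/-- `ℓ̄ = max {ℓ' ∈ {1, …, ℓ−1} : s_{ℓ'} > s_{ℓ+1}}`. -/
noncomputable def lbar (s : ℕ → ℝ) (ℓ : ℕ) : ℕ :=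
  ((Finset.Icc 1 (ℓ - 1)).filter (fun t => s (ℓ + 1) < s t)).sup id

/-- The upper-bound quantity `U_s(ℓ)`; when `s ℓ = s (ℓ+1)` the term `1/(s_ℓ − s_{ℓ+1}) − 1`
is interpreted as `∞`, so the `min` reduces to its second argument. -/
noncomputable def Uval (s : ℕ → ℝ) (n m ℓ : ℕ) : ℝ :=
  if ℓ = 1 then 1 / (s 1 - s 2) - 1
  else
    if s ℓ = s (ℓ + 1) then
      (((n : ℝ) - 1) * (upave s 2 - downave s m (lbar s ℓ)) + 1 / 2) /
        (upave s (lbar s ℓ) - s (ℓ + 1))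
    else
      min (1 / (s ℓ - s (ℓ + 1)) - 1)
        ((((n : ℝ) - 1) * (upave s 2 - downave s m (lbar s ℓ)) + 1 / 2) /
          (upave s (lbar s ℓ) - s (ℓ + 1)))


lemma aux_tb {m : ℕ} [NeZero m] (τ : Pref m) (A : Finset (Fin m)) (h : A.Nonempty) :
    tiebreak τ A ∈ A ∧ ∀ c ∈ A, τ (tiebreak τ A) ≤ τ c := by
  have hm := (A.image (fun c => τ c)).min'_mem (h.image _)
  have hl : ∀ c ∈ A, (A.image (fun c => τ c)).min' (h.image _) ≤ τ c := fun c hc =>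
    Finset.min'_le _ _ (Finset.mem_image_of_mem _ hc)
  unfold tiebreak
  rw [dif_pos h]
  obtain ⟨c, hc, he⟩ := Finset.mem_image.1 hm
  constructor
  · rw [← he]; simpa using hc
  · intro c hc
    simpa using hl c hc

lemma aux_rule {m N : ℕ} [NeZero m] (s : ℕ → ℝ) (P : Profile m N) :
    (posRule m s N P).Nonempty := by
  obtain ⟨c, -, hc⟩ := Finset.exists_max_image (Finset.univ : Finset (Fin m))
    (posScore s P) ⟨0, Finset.mem_univ _⟩
  exact ⟨c, by simpa [posRule] using hc⟩

noncomputable def restS {m n : ℕ} (s : ℕ → ℝ) (P : Profile m n) (i : Fin n) (c : Fin m) : ℝ :=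
  ∑ j ∈ Finset.univ.erase i, s ((P j c : ℕ) + 1)

lemma aux_add {m n : ℕ} (s : ℕ → ℝ) (P : Profile m n) (i : Fin n) (k : ℕ) (c : Fin m) :
    posScore s (addCopies P i k) c = restS s P i c + ((k : ℝ) + 1) * s ((P i c : ℕ) + 1) := by
  unfold posScore restS
  rw [Fin.sum_univ_add]
  simp only [addCopies, Fin.val_castAdd, Fin.is_lt, dite_true, Fin.val_natAdd, Fin.eta]
  rw [← Finset.sum_erase_add _ _ (Finset.mem_univ i)]
  simp
  ring

lemma aux_upd {m n : ℕ} (s : ℕ → ℝ) (P : Profile m n) (i : Fin n) (q : Pref m) (c : Fin m) :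
    posScore s (Function.update P i q) c = restS s P i c + s ((q c : ℕ) + 1) := by
  unfold posScore restS
  rw [← Finset.sum_erase_add _ _ (Finset.mem_univ i)]
  congr 1
  · apply Finset.sum_congr rfl
    intro j hj
    rw [Function.update_of_ne (Finset.ne_of_mem_erase hj)]
  · simp

lemma aux_bot (s : ℕ → ℝ) (m : ℕ) (hm : ∀ a b : ℕ, 1 ≤ a → a ≤ b → b ≤ m → s b ≤ s a)
    (A : Finset ℕ) (hA : A ⊆ Finset.Icc 1 m) :
    ∑ j ∈ Finset.Icc (m - A.card + 1) m, s j ≤ ∑ j ∈ A, s j := by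
  have hc : A.card ≤ m := by simpa using Finset.card_le_card hA
  set B := Finset.Icc (m - A.card + 1) m with hB
  have hBc : B.card = A.card := by simp [hB]; omega
  rcases Nat.eq_zero_or_pos A.card with h0 | h0
  · have h1 : A = ∅ := Finset.card_eq_zero.1 h0
    have h2 : B = ∅ := Finset.card_eq_zero.1 (hBc.trans h0)
    simp [h1, h2]
  have hcd : (A \ B).card = (B \ A).card := by
    have e1 := Finset.card_sdiff_add_card_inter A B
    have e2 := Finset.card_sdiff_add_card_inter B A
    rw [Finset.inter_comm] at e2
    omega
  have l1 : ((A \ B).card : ℝ) * s (m - A.card + 1) ≤ ∑ j ∈ A \ B, s j := by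
    rw [← nsmul_eq_mul]
    apply Finset.card_nsmul_le_sum
    intro x hx
    have := Finset.mem_sdiff.1 hx
    have h3 := Finset.mem_Icc.1 (hA this.1)
    have h4 : ¬ (m - A.card + 1 ≤ x ∧ x ≤ m) := fun h => this.2 (Finset.mem_Icc.2 h)
    exact hm _ _ h3.1 (by omega) (by omega)
  have l2 : ∑ j ∈ B \ A, s j ≤ ((B \ A).card : ℝ) * s (m - A.card + 1) := by
    rw [← nsmul_eq_mul]
    apply Finset.sum_le_card_nsmul
    intro x hx
    have h3 := Finset.mem_Icc.1 (Finset.mem_sdiff.1 hx).1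
    exact hm _ _ (by omega) (by omega) (by omega)
  rw [hcd] at l1
  have e1 := Finset.sum_inter_add_sum_sdiff A B s
  have e2 := Finset.sum_inter_add_sum_sdiff B A s
  rw [Finset.inter_comm] at e2
  linarith

/-- total rest score of the voter's top `t` candidates. -/
lemma aux_rest {m n : ℕ} (s : ℕ → ℝ)
    (hm : ∀ a b : ℕ, 1 ≤ a → a ≤ b → b ≤ m → s b ≤ s a)
    (P : Profile m n) (i : Fin n) (T : Finset (Fin m)) :
    ((n : ℝ) - 1) * ∑ j ∈ Finset.Icc (m - T.card + 1) m, s j ≤ ∑ c ∈ T, restS s P i c := by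
  unfold restS
  rw [Finset.sum_comm]
  have hcard : ((Finset.univ.erase i).card : ℝ) = (n : ℝ) - 1 := by
    rw [Finset.card_erase_of_mem (Finset.mem_univ i), Finset.card_univ, Fintype.card_fin,
      Nat.cast_sub (by have := i.2; omega)]
    simp
  rw [← hcard, ← nsmul_eq_mul]
  apply Finset.card_nsmul_le_sum
  intro j _
  have hinj : Function.Injective (fun c : Fin m => (P j c : ℕ) + 1) := by
    intro a b h
    simpa [Fin.val_inj] using h
  have := aux_bot s m hm (T.image (fun c : Fin m => (P j c : ℕ) + 1)) (by
    intro x hx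
    obtain ⟨c, -, rfl⟩ := Finset.mem_image.1 hx
    have := (P j c).2
    exact Finset.mem_Icc.2 ⟨by omega, by omega⟩)
  rw [Finset.card_image_of_injective _ hinj, Finset.sum_image (fun a _ b _ h => hinj h)] at this
  exact this

lemma aux_two {m n : ℕ} (s : ℕ → ℝ)
    (hm : ∀ a b : ℕ, 1 ≤ a → a ≤ b → b ≤ m → s b ≤ s a)
    (P : Profile m n) (i : Fin n) (a w : Fin m) (haw : a ≠ w) :
    restS s P i a + restS s P i w ≤ ((n : ℝ) - 1) * (s 1 + s 2) := by
  unfold restS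
  rw [← Finset.sum_add_distrib]
  have hcard : ((Finset.univ.erase i).card : ℝ) = (n : ℝ) - 1 := by
    rw [Finset.card_erase_of_mem (Finset.mem_univ i), Finset.card_univ, Fintype.card_fin,
      Nat.cast_sub (by have := i.2; omega)]
    simp
  rw [← hcard, ← nsmul_eq_mul]
  apply Finset.sum_le_card_nsmul
  intro j _
  have hne : (P j a : ℕ) ≠ P j w := fun h => haw ((P j).injective (Fin.ext h))
  have h1 := (P j a).2
  have h2 := (P j w).2
  rcases lt_or_gt_of_ne hne with h | h
  · have e1 := hm 1 ((P j a : ℕ) + 1) (by omega) (by omega) (by omega)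
    have e2 := hm 2 ((P j w : ℕ) + 1) (by omega) (by omega) (by omega)
    linarith
  · have e1 := hm 2 ((P j a : ℕ) + 1) (by omega) (by omega) (by omega)
    have e2 := hm 1 ((P j w : ℕ) + 1) (by omega) (by omega) (by omega)
    linarith

/-- The averaging bound. -/
lemma aux_second {m n : ℕ} (s : ℕ → ℝ) (hs1 : s 1 = 1) (hsm : s m = 0)
    (hm : ∀ a b : ℕ, 1 ≤ a → a ≤ b → b ≤ m → s b ≤ s a) (hs12 : s 1 ≠ s 2)
    (P : Profile m n) (i : Fin n) (q : Pref m) (k ℓ : ℕ) (hℓ : 2 ≤ ℓ) (a w : Fin m) (haw : a ≠ w)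
    (hw : (P i w : ℕ) = ℓ)
    (h1 : ∀ c, restS s P i c + ((k : ℝ) + 1) * s ((P i c : ℕ) + 1)
      ≤ restS s P i w + ((k : ℝ) + 1) * s (ℓ + 1))
    (h2 : restS s P i w + s ((q w : ℕ) + 1) ≤ restS s P i a + s ((q a : ℕ) + 1)) :
    (k : ℝ) < (((n : ℝ) - 1) * (upave s 2 - downave s m (lbar s ℓ)) + 1 / 2) /
        (upave s (lbar s ℓ) - s (ℓ + 1)) := by
  have hwlt := (P i w).2
  have hqa := (q a).2
  have hqw := (q w).2
  set F := (Finset.Icc 1 (ℓ - 1)).filter (fun t => s (ℓ + 1) < s t) with hF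
  have hF1 : 1 ∈ F := by
    have e1 := hm 1 2 (by omega) (by omega) (by omega)
    have e2 := hm 2 (ℓ + 1) (by omega) (by omega) (by omega)
    have e3 := lt_of_le_of_ne e1 hs12.symm
    simp only [hF, Finset.mem_filter, Finset.mem_Icc]
    exact ⟨by omega, by linarith⟩
  have hLmem : lbar s ℓ ∈ F := by
    obtain ⟨x, hx, he⟩ := Finset.exists_mem_eq_sup F ⟨1, hF1⟩ id
    have : lbar s ℓ = x := he
    rwa [this]
  set L := lbar s ℓ with hL
  simp only [hF, Finset.mem_filter, Finset.mem_Icc] at hLmem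
  obtain ⟨⟨hL1, hL2⟩, hL3⟩ := hLmem
  have hLp : (0 : ℝ) < L := by exact_mod_cast hL1
  -- top L candidates
  set T : Finset (Fin m) := Finset.univ.filter (fun c => (P i c : ℕ) < L) with hT
  have hinj : Function.Injective (fun c : Fin m => (P i c : ℕ) + 1) := by
    intro a b h
    simpa [Fin.val_inj] using h
  have hTi : T.image (fun c : Fin m => (P i c : ℕ) + 1) = Finset.Icc 1 L := by
    ext x
    simp only [hT, Finset.mem_image, Finset.mem_filter, Finset.mem_univ, true_and,
      Finset.mem_Icc]
    constructor
    · rintro ⟨c, h, rfl⟩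
      omega
    · rintro ⟨h3, h4⟩
      refine ⟨(P i).symm ⟨x - 1, by omega⟩, ?_, ?_⟩
      · simp; omega
      · simp; omega
  have hTc : T.card = L := by
    rw [← Finset.card_image_of_injective T hinj, hTi]; simp
  have hTs : ∑ c ∈ T, s ((P i c : ℕ) + 1) = ∑ j ∈ Finset.Icc 1 L, s j := by
    rw [← hTi, Finset.sum_image (fun a _ b _ h => hinj h)]
  have hup : ∑ j ∈ Finset.Icc 1 L, s j = L * upave s L := by
    unfold upave; field_simp
  have hdn : ∑ j ∈ Finset.Icc (m - L + 1) m, s j = L * downave s m L := by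
    unfold downave; field_simp
  have hup2 : s 1 + s 2 = 2 * upave s 2 := by
    unfold upave
    rw [show Finset.Icc 1 2 = ({1, 2} : Finset ℕ) from rfl]
    simp; ring
  have hD : 0 < upave s L - s (ℓ + 1) := by
    have : (L : ℝ) * s L ≤ ∑ j ∈ Finset.Icc 1 L, s j := by
      have := Finset.card_nsmul_le_sum (Finset.Icc 1 L) s (s L) (by
        intro x hx
        have := Finset.mem_Icc.1 hx
        exact hm _ _ this.1 this.2 (by omega))
      simpa using this
    rw [hup] at this
    have := le_of_mul_le_mul_left this hLp
    linarith
  have hsum : ∑ c ∈ T, (restS s P i c + ((k : ℝ) + 1) * s ((P i c : ℕ) + 1))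
      ≤ L * (restS s P i w + ((k : ℝ) + 1) * s (ℓ + 1)) := by
    have := Finset.sum_le_card_nsmul T _ _ (fun c _ => h1 c)
    rwa [hTc, nsmul_eq_mul] at this
  rw [Finset.sum_add_distrib, ← Finset.mul_sum, hTs, hup] at hsum
  have hr := aux_rest s hm P i T
  rw [hTc, hdn] at hr
  have hlow : ((n : ℝ) - 1) * downave s m L + ((k : ℝ) + 1) * upave s L ≤
      restS s P i w + ((k : ℝ) + 1) * s (ℓ + 1) := by
    apply le_of_mul_le_mul_left _ hLp
    linarith
  have h3 := aux_two s hm P i a w haw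
  rw [hup2] at h3
  have h4 := hm 1 ((q a : ℕ) + 1) (by omega) (by omega) (by omega)
  have h5 := hm ((q w : ℕ) + 1) m (by omega) (by omega) (by omega)
  rw [lt_div_iff₀ hD]
  linarith

/-- For any positional scoring rule with `s 1 ≠ s 2`, the rule is
`k`-augmentation strategyproof for every `k ≥ max_{ℓ ∈ {1,…,m−1}} U_s(ℓ)`;
consequently `Φ(F_s) ≤ max_ℓ U_s(ℓ)`. -/
theorem posRule_kASP_of_Uval_le (m n : ℕ) [NeZero m] (hm : 3 ≤ m) (hn : 2 ≤ n)
    (s : ℕ → ℝ) (hs1 : s 1 = 1) (hsm : s m = 0)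
    (hmono : ∀ j : ℕ, 1 ≤ j → j < m → s (j + 1) ≤ s j)
    (hs12 : s 1 ≠ s 2) :
    ∀ k : ℕ,
      (Finset.Icc 1 (m - 1)).sup' (Finset.nonempty_Icc.mpr (by omega))
          (fun ℓ => Uval s n m ℓ) ≤ (k : ℝ) →
        kASP m n (posRule m s) k := by
  intro k hk τ P i q
  have hm' : ∀ a b : ℕ, 1 ≤ a → a ≤ b → b ≤ m → s b ≤ s a := by
    intro a b ha hab
    induction b, hab using Nat.le_induction with
    | base => intro _; exact le_rfl
    | succ b hb ih => intro h; exact (hmono b (by omega) (by omega)).trans (ih (by omega))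
  by_contra hcon
  rw [not_le] at hcon
  obtain ⟨hw1, hw2⟩ := aux_tb τ _ (aux_rule s (addCopies P i k))
  obtain ⟨ha1, ha2⟩ := aux_tb τ _ (aux_rule s (Function.update P i q))
  set w := tiebreak τ (posRule m s (n + k) (addCopies P i k))
  set a := tiebreak τ (posRule m s n (Function.update P i q))
  have haw : a ≠ w := by rintro h; rw [h] at hcon; exact lt_irrefl _ hcon
  simp only [posRule, Finset.mem_filter, Finset.mem_univ, true_and, aux_add] at hw1 hw2
  simp only [posRule, Finset.mem_filter, Finset.mem_univ, true_and, aux_upd] at ha1 ha2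
  have hcon' : (P i a : ℕ) < P i w := hcon
  have hwlt := (P i w).2
  have hqa := (q a).2
  have hqw := (q w).2
  obtain ⟨ℓ, hℓ⟩ : ∃ ℓ, (P i w : ℕ) = ℓ := ⟨_, rfl⟩
  have hU : Uval s n m ℓ ≤ k :=
    (Finset.le_sup' (fun ℓ => Uval s n m ℓ)
      (Finset.mem_Icc.2 ⟨by omega, by omega⟩)).trans hk
  have h4 := hm' 1 ((q a : ℕ) + 1) (by omega) (by omega) (by omega)
  have h5 := hm' ((q w : ℕ) + 1) m (by omega) (by omega) (by omega)
  have h6 := hw1 a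
  have h7 := ha1 w
  have h8 := hm' ((P i a : ℕ) + 1) ℓ (by omega) (by omega) (by omega)
  have hstep : s (ℓ + 1) ≤ s ℓ := hmono ℓ (by omega) (by omega)
  rw [hℓ] at h6
  have hk0 : (0 : ℝ) < (k : ℝ) + 1 := by positivity
  have hmul := mul_le_mul_of_nonneg_left h8 hk0.le
  have first : s ℓ ≠ s (ℓ + 1) → ¬ (1 / (s ℓ - s (ℓ + 1)) - 1 ≤ (k : ℝ)) := by
    intro hne hle
    have hpos : 0 < s ℓ - s (ℓ + 1) := sub_pos.2 (lt_of_le_of_ne hstep hne.symm)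
    have h9 : 1 / (s ℓ - s (ℓ + 1)) ≤ (k : ℝ) + 1 := by linarith
    rw [div_le_iff₀ hpos] at h9
    have e1 : restS s P i w + ((k : ℝ) + 1) * s ((P i w : ℕ) + 1) =
        restS s P i a + ((k : ℝ) + 1) * s ((P i a : ℕ) + 1) := by
      rw [hℓ]; apply le_antisymm <;> linarith
    have e2 : restS s P i a + s ((q a : ℕ) + 1) = restS s P i w + s ((q w : ℕ) + 1) := by
      apply le_antisymm <;> linarith
    have t1 := hw2 a (fun c => by rw [← e1]; exact hw1 c)
    have t2 := ha2 w (fun c => by rw [← e2]; exact ha1 c)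
    exact haw (τ.injective (le_antisymm t2 t1))
  rcases Nat.lt_or_ge ℓ 2 with hl | hl
  · obtain rfl : ℓ = 1 := by omega
    simp only [Uval, if_true] at hU
    exact first hs12 hU
  · have second := aux_second s hs1 hsm hm' hs12 P i q k ℓ hl a w haw hℓ
      (by rw [hℓ] at hw1; exact hw1) h7
    unfold Uval at hU
    rw [if_neg (by omega)] at hU
    split_ifs at hU with he
    · linarith
    · rcases min_le_iff.1 hU with h | h
      · exact first he h
      · linarith
end

section
/- Assume m ≥ 4 and n is odd. Then for every integer k with 0 ≤ k < n−1, Black's Rule is not k-augmentation strategyproof: there exist a profile with n voters, a voter i, a manipulation, and a tie-breaker under which the manipulation yields a strictly better outcome for voter i than adding k truthful copies of her vote. Since Black's Rule is majority-consistent, its manipulation potential is exactly n−1. -/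
open Finset

/-- Borda score of candidate `c`: each voter awards `m - 1 - (rank of c)` points. -/
def bordaScore {m N : ℕ} (P : Profile m N) (c : Fin m) : ℕ :=
  ∑ i : Fin N, (m - 1 - (P i c : ℕ))

/-- Borda Count: the winners are the candidates with maximal Borda score. -/
def borda (m : ℕ) : SCC m := fun _ P =>
  Finset.univ.filter (fun c => ∀ c', bordaScore P c' ≤ bordaScore P c)

/-- The margin of `c` against `d`: the number of voters preferring `c` to `d` minus the
number of voters preferring `d` to `c`. -/
def margin {m N : ℕ} (P : Profile m N) (c d : Fin m) : ℤ :=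
  ((Finset.univ.filter (fun i => P i c < P i d)).card : ℤ) -
    ((Finset.univ.filter (fun i => P i d < P i c)).card : ℤ)

/-- The set of Condorcet winners (which is empty or a singleton). -/
def condorcetSet {m N : ℕ} (P : Profile m N) : Finset (Fin m) :=
  Finset.univ.filter (fun c => ∀ d : Fin m, d ≠ c → 0 < margin P c d)

/-- Black's rule: the Condorcet winner if one exists, otherwise the Borda winners. -/
def black (m : ℕ) : SCC m := fun N P =>
  if (condorcetSet P).Nonempty then condorcetSet P else borda m N P

def sgnP {m : ℕ} (c d : Fin m) (p : Pref m) : ℤ :=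
  (if p c < p d then 1 else 0) - (if p d < p c then 1 else 0)

lemma margin_eq_sum {m N : ℕ} (P : Profile m N) (c d : Fin m) :
    margin P c d = ∑ j : Fin N, sgnP c d (P j) := by
  simp [margin, sgnP, Finset.sum_sub_distrib]

lemma margin_antisymm {m N : ℕ} (P : Profile m N) (c d : Fin m) :
    margin P c d = - margin P d c := by
  simp [margin]

lemma black_of_cw {m N : ℕ} (P : Profile m N) (c : Fin m)
    (h : ∀ d : Fin m, d ≠ c → 0 < margin P c d) : black m N P = {c} := by
  have hs : condorcetSet P = {c} := by
    ext e
    simp only [condorcetSet, Finset.mem_filter, Finset.mem_univ, true_and, Finset.mem_singleton]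
    constructor
    · intro he
      by_contra hne
      have h1 := h e hne
      have h2 := he c (Ne.symm hne)
      rw [margin_antisymm] at h1
      omega
    · rintro rfl
      exact h
  simp [black, hs]

lemma tiebreak_singleton {m : ℕ} [NeZero m] (τ : Pref m) (c : Fin m) :
    tiebreak τ {c} = c := by
  simp [tiebreak]

lemma tiebreak_zero {m : ℕ} [NeZero m] (A : Finset (Fin m)) (h : (0 : Fin m) ∈ A) :
    tiebreak (Equiv.refl _) A = 0 := by
  have hA : A.Nonempty := ⟨0, h⟩
  simp only [tiebreak, hA, dif_pos]
  have := Finset.min'_le (A.image (fun c => (Equiv.refl (Fin m)) c)) 0 (by simpa using h)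
  simpa using this

lemma kASP_large {m n : ℕ} [NeZero m] (k : ℕ) (hk : n - 1 ≤ k) : kASP m n (black m) k := by
  intro τ P i q
  have key : black m (n + k) (addCopies P i k) = {(P i).symm 0} := by
    apply black_of_cw
    intro d hd
    rw [margin_eq_sum, Fin.sum_univ_add]
    have hlt : P i ((P i).symm 0) < P i d := by
      rw [Equiv.apply_symm_apply]
      apply Fin.pos_iff_ne_zero.2
      intro h
      apply hd
      rw [← h, Equiv.symm_apply_apply]
    have hi : sgnP ((P i).symm 0) d (P i) = 1 := by
      simp only [sgnP, if_pos hlt, if_neg hlt.asymm]; rfl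
    have e1 : ∀ j : Fin n, addCopies P i k (Fin.castAdd k j) = P j := by
      intro j; simp [addCopies]
    have e2 : ∀ j : Fin k, addCopies P i k (Fin.natAdd n j) = P i := by
      intro j; simp [addCopies]
    simp only [e1, e2, hi]
    have hb : ∀ p : Pref m, -1 ≤ sgnP ((P i).symm 0) d p := by
      intro p; unfold sgnP; split_ifs <;> omega
    rw [← Finset.add_sum_erase _ _ (Finset.mem_univ i), hi]
    have := Finset.card_nsmul_le_sum (Finset.univ.erase i)
      (fun j => sgnP ((P i).symm 0) d (P j)) (-1) (fun j _ => hb _)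
    simp only [Finset.card_erase_of_mem (Finset.mem_univ i), Finset.card_univ, Fintype.card_fin,
      nsmul_eq_mul] at this
    have hn : 0 < n := i.pos
    simp only [Finset.sum_const, Finset.card_univ, Fintype.card_fin, nsmul_eq_mul]
    omega
  rw [key, tiebreak_singleton, Equiv.apply_symm_apply]
  exact Fin.zero_le _

def ext4 {m : ℕ} (hm : 4 ≤ m) (σ : Equiv.Perm (Fin 4)) : Pref m where
  toFun c := if h : (c : ℕ) < 4 then ⟨σ ⟨c, h⟩, by omega⟩ else c
  invFun c := if h : (c : ℕ) < 4 then ⟨σ.symm ⟨c, h⟩, by omega⟩ else c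
  left_inv c := by
    by_cases h : (c : ℕ) < 4 <;> simp [h]
  right_inv c := by
    by_cases h : (c : ℕ) < 4 <;> simp [h]

lemma ext4_lt {m : ℕ} (hm : 4 ≤ m) (σ : Equiv.Perm (Fin 4)) (x : Fin 4) :
    ((ext4 hm σ (Fin.castLE hm x) : Fin m) : ℕ) = σ x := by
  simp [ext4]

lemma ext4_ge {m : ℕ} (hm : 4 ≤ m) (σ : Equiv.Perm (Fin 4)) (c : Fin m) (h : ¬ (c : ℕ) < 4) :
    ((ext4 hm σ c : Fin m) : ℕ) = c := by
  simp [ext4, h]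

lemma fin_cases4 {m : ℕ} (hm : 4 ≤ m) (c : Fin m) :
    (∃ x : Fin 4, c = Fin.castLE hm x) ∨ ¬ (c : ℕ) < 4 := by
  by_cases h : (c : ℕ) < 4
  · exact Or.inl ⟨⟨c, h⟩, rfl⟩
  · exact Or.inr h

def sA : Equiv.Perm (Fin 4) := ⟨![0,2,3,1], ![0,3,1,2], by decide, by decide⟩
def sB : Equiv.Perm (Fin 4) := ⟨![1,3,0,2], ![2,0,3,1], by decide, by decide⟩
def sI : Equiv.Perm (Fin 4) := ⟨![2,0,1,3], ![1,2,0,3], by decide, by decide⟩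
def sQ : Equiv.Perm (Fin 4) := ⟨![2,1,0,3], ![2,1,0,3], by decide, by decide⟩

def gprof {m : ℕ} (hm : 4 ≤ m) (h : ℕ) (x : Pref m) (j : ℕ) : Pref m :=
  if j = 0 then x else if j < 1 + h then ext4 hm sA else if j < 1 + h + h then ext4 hm sB
    else ext4 hm sI

lemma sum_gprof {m : ℕ} (hm : 4 ≤ m) (h k N : ℕ) (hN : N = 1 + h + h + k) (x : Pref m)
    (Q : Profile m N) (hQ : ∀ j, Q j = gprof hm h x j) (f : Pref m → ℤ) :
    ∑ j, f (Q j) = f x + h * f (ext4 hm sA) + h * f (ext4 hm sB) + k * f (ext4 hm sI) := by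
  subst hN
  simp only [hQ]
  rw [Fin.sum_univ_eq_sum_range (fun j => f (gprof hm h x j)), Finset.sum_range_add,
    Finset.sum_range_add, Finset.sum_range_add]
  congr 1
  · congr 1
    · congr 1
      · simp [gprof]
      · rw [Finset.sum_congr rfl (g := fun _ => f (ext4 hm sA))]
        · simp
        · intro j hj
          have := Finset.mem_range.1 hj
          simp [gprof, this]
    · rw [Finset.sum_congr rfl (g := fun _ => f (ext4 hm sB))]
      · simp
      · intro j hj
        have := Finset.mem_range.1 hj
        unfold gprof
        rw [if_neg (by omega), if_neg (by omega), if_pos (by omega)]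
  · rw [Finset.sum_congr rfl (g := fun _ => f (ext4 hm sI))]
    · simp
    · intro j hj
      unfold gprof
      rw [if_neg (by omega), if_neg (by omega), if_neg (by omega)]

lemma sgn_lt {m : ℕ} (hm : 4 ≤ m) (σ : Equiv.Perm (Fin 4)) (x y : Fin 4) :
    sgnP (Fin.castLE hm x) (Fin.castLE hm y) (ext4 hm σ) =
      (if σ x < σ y then 1 else 0) - (if σ y < σ x then 1 else 0) := by
  simp only [sgnP, Fin.lt_def, ext4_lt]

lemma sgn_ge {m : ℕ} (hm : 4 ≤ m) (σ : Equiv.Perm (Fin 4)) (x : Fin 4) (d : Fin m)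
    (h : ¬ (d : ℕ) < 4) : sgnP (Fin.castLE hm x) d (ext4 hm σ) = 1 := by
  have := (σ x).isLt
  simp only [sgnP, Fin.lt_def, ext4_lt, ext4_ge hm σ d h]
  rw [if_pos (by omega), if_neg (by omega)]; rfl

lemma bordaScore_cast {m N : ℕ} (P : Profile m N) (c : Fin m) :
    (bordaScore P c : ℤ) = ∑ j, ((m : ℤ) - 1 - (P j c : ℕ)) := by
  unfold bordaScore
  push_cast
  apply Finset.sum_congr rfl
  intro j _
  have := (P j c).isLt
  omega

lemma not_kASP_small {m h k : ℕ} [NeZero m] (hm : 4 ≤ m) (hk : k < 2 * h) :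
    ¬ kASP m (1 + h + h) (black m) k := by
  intro H
  have h0 : 0 < 1 + h + h := by omega
  let P : Profile m (1 + h + h) := fun j => gprof hm h (ext4 hm sI) j
  have H1 := H (Equiv.refl _) P ⟨0, h0⟩ (ext4 hm sQ)
  have hP0 : P ⟨0, h0⟩ = ext4 hm sI := by simp [P, gprof]
  -- the manipulated outcome
  have hman : black m (1 + h + h) (Function.update P ⟨0, h0⟩ (ext4 hm sQ)) =
      {Fin.castLE hm 2} := by
    apply black_of_cw
    intro d hd
    have hQ : ∀ j, Function.update P ⟨0, h0⟩ (ext4 hm sQ) j = gprof hm h (ext4 hm sQ) j := by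
      intro j
      by_cases hj : j = ⟨0, h0⟩
      · subst hj; simp [gprof]
      · have hj' : (j : ℕ) ≠ 0 := fun e => hj (Fin.ext e)
        rw [Function.update_of_ne hj]
        simp only [P, gprof, if_neg hj']
    rw [margin_eq_sum, sum_gprof hm h 0 _ (by omega) _ _ hQ]
    rcases fin_cases4 hm d with ⟨x, rfl⟩ | hge
    · simp only [sgn_lt]
      fin_cases x <;> simp [sA, sB, sI, sQ] at hd ⊢
    · simp only [sgn_ge hm _ _ d hge]
      push_cast; omega
  have hQ : ∀ j, addCopies P ⟨0, h0⟩ k j = gprof hm h (ext4 hm sI) j := by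
    intro j
    unfold addCopies
    split_ifs with hj
    · rfl
    · rw [hP0]
      unfold gprof
      rw [if_neg (by omega), if_neg (by omega), if_neg (by omega)]
  have hz : (0 : Fin m) = Fin.castLE hm 0 := by ext; simp
  have htr : (0 : Fin m) ∈ black m (1 + h + h + k) (addCopies P ⟨0, h0⟩ k) := by
    have hempty : ¬ (condorcetSet (addCopies P ⟨0, h0⟩ k)).Nonempty := by
      rintro ⟨c, hc⟩
      simp only [condorcetSet, Finset.mem_filter, Finset.mem_univ, true_and] at hc
      have hm' : ∀ c d, margin (addCopies P ⟨0, h0⟩ k) c d = _ := fun c d =>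
        (margin_eq_sum _ c d).trans (sum_gprof hm h k _ rfl _ _ hQ _)
      rcases fin_cases4 hm c with ⟨x, rfl⟩ | hge
      · have key : ∃ y : Fin 4, y ≠ x ∧
            margin (addCopies P ⟨0, h0⟩ k) (Fin.castLE hm x) (Fin.castLE hm y) ≤ 0 := by
          fin_cases x
          · refine ⟨2, by decide, ?_⟩
            rw [hm']; simp only [sgn_lt]; simp [sA, sB, sI] <;> omega
          · refine ⟨0, by decide, ?_⟩
            rw [hm']; simp only [sgn_lt]; simp [sA, sB, sI] <;> omega
          · refine ⟨1, by decide, ?_⟩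
            rw [hm']; simp only [sgn_lt]; simp [sA, sB, sI] <;> omega
          · refine ⟨0, by decide, ?_⟩
            rw [hm']; simp only [sgn_lt]; simp [sA, sB, sI] <;> omega
        obtain ⟨y, hy, hle⟩ := key
        have := hc (Fin.castLE hm y) (fun e => hy (Fin.castLE_injective hm e))
        omega
      · have := hc (Fin.castLE hm 0) (by rintro rfl; simp at hge)
        rw [margin_antisymm, hm'] at this
        simp only [sgn_ge hm _ _ c hge] at this
        omega
    unfold black
    rw [if_neg hempty]
    simp only [borda, Finset.mem_filter, Finset.mem_univ, true_and]
    intro c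
    zify
    have hb : ∀ c, (bordaScore (addCopies P ⟨0, h0⟩ k) c : ℤ) = _ := fun c =>
      (bordaScore_cast _ c).trans
        (sum_gprof hm h k _ rfl _ _ hQ (fun p => (m : ℤ) - 1 - (p c : ℕ)))
    rw [hb, hb, hz]
    rcases fin_cases4 hm c with ⟨x, rfl⟩ | hge
    · simp only [ext4_lt]
      fin_cases x <;> simp [sA, sB, sI] <;> nlinarith
    · simp only [ext4_lt, ext4_ge hm _ c hge]
      have : (4 : ℤ) ≤ (c : ℕ) := by omega
      simp only [sA, sB, sI, Equiv.coe_fn_mk]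
      simp
      nlinarith
  rw [hman, tiebreak_singleton, tiebreak_zero _ htr, hP0, hz, Fin.le_def, ext4_lt, ext4_lt] at H1
  simp [sI] at H1

/-- For `m ≥ 4` and odd `n`: Black's Rule is not `k`-augmentation
strategyproof for any `0 ≤ k < n − 1`, and (being majority-consistent) its manipulation
potential is exactly `n − 1`. -/
theorem black_manipPot_eq (m n : ℕ) [NeZero m] (hm : 4 ≤ m) (hn : 2 ≤ n) (hodd : Odd n) :
    (∀ k : ℕ, k < n - 1 → ¬ kASP m n (black m) k) ∧
      manipPot m n (black m) = ((n - 1 : ℕ) : ℕ∞) := by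
  have h1 : ∀ k : ℕ, k < n - 1 → ¬ kASP m n (black m) k := by
    intro k hk
    obtain ⟨h, rfl⟩ := hodd
    have e : 2 * h + 1 = 1 + h + h := by ring
    rw [e]
    exact not_kASP_small hm (by omega)
  refine ⟨h1, ?_⟩
  unfold manipPot
  apply le_antisymm
  · apply sInf_le
    exact ⟨n - 1, fun k' hk' => kASP_large k' hk', rfl⟩
  · apply le_sInf
    rintro _ ⟨k, hk, rfl⟩
    by_contra hlt
    have hlt' : k < n - 1 := by
      by_contra hge
      exact hlt (Nat.cast_le.2 (not_lt.1 hge))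
    exact h1 k hlt' (hk k le_rfl)
end
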